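/- For a positive integer n, let σ be a generator of Gal(F_{q^n}/F_q) and let D_n denote the number of triples (c_0, c_1, c_3) ∈ F_{q^n}³ such that the F_q-linear map x ↦ c_0·x + c_1·σ(x) + c_3·σ³(x) on F_{q^n} has kernel of F_q-dimension exactly 3 (i.e., the number of codewords of rank weight n−3 in the rank-metric code ⟨x, x^σ, x^{σ³}⟩_{F_{q^n}}). Then: D_4 = D_5 = 0; D_6 = (q^6−1)(q^3+1); D_7 = 0 if q is odd and D_7 = (q^7−1)²/(q−1) if q is even; and D_8 = 0 if q ≡ 1 (mod 3), D_8 = (q^8−1)²/(q−1) if q ≡ 0 (mod 3), and D_8 = 2(q^8−1)²/(q−1) if q ≡ 2 (mod 3). -/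

import Mathlib

/-- The number of triples `(c₀, c₁, c₃) ∈ F_{q^n}³` such that the `F_q`-linear map
`x ↦ c₀·x + c₁·σ(x) + c₃·σ³(x)` has kernel of `F_q`-dimension exactly `3`, i.e. the
number of codewords of rank weight `n - 3` in `⟨x, x^σ, x^{σ³}⟩_{F_{q^n}}`. -/
noncomputable def weightCount3 (K L : Type*) [Field K] [Field L] [Algebra K L]
    (σ : L ≃ₐ[K] L) : ℕ :=
  Nat.card {c : L × L × L //
    Module.finrank K
      (LinearMap.ker
        (LinearMap.mulLeft K c.1 + LinearMap.mulLeft K c.2.1 ∘ₗ σ.toLinearMap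
          + LinearMap.mulLeft K c.2.2 ∘ₗ (σ ^ 3 : L ≃ₐ[K] L).toLinearMap)) = 3}

/-!
The restrictions of `1, σ, …, σ^(d-1)` to a `K`-subspace of `L` of dimension at least `d` are
linearly independent over `L`: once `σ^d` depends on the lower powers, so do all powers, and these
span all `K`-linear maps. Hence a nonzero linearized polynomial of degree at most `d` has a kernel
of dimension at most `d`, and one of degree exactly `d` attains `d` if and only if it divides
`σ^n - 1` on the right, i.e. the remainder of `σ^n` is `1`. After scaling to `σ³ - bσ - a`,
computing this remainder for `n = 4, …, 8` gives three equations in `a`, `b` and their conjugates.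
They are unsolvable for `n = 4, 5` and say `b = 0`, `a^(q³+1) = 1` for `n = 6`. For `n = 7` they
force `2 = 0` and are parametrized by the elements `b` of norm one. For `n = 8`, the element
`t = a σ³(a) σ⁵(b)` satisfies `σ t = 1 - t` and `t² - t + 1 = 0`, and the solutions correspond to
pairs of such a `t` and an `a` of norm one; the number of admissible `t` depends on `q` modulo `3`.
-/

open Module Submodule

section CyclicExtension

variable {K L : Type*} [Field K] [Field L] [Algebra K L] {σ : L ≃ₐ[K] L}

theorem span_range_pow_toLinearMap [FiniteDimensional K L] [IsGalois K L]
    (hσ : ∀ τ, τ ∈ Subgroup.zpowers σ) :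
    span L (Set.range fun i : ℕ => (σ ^ i).toLinearMap) = ⊤ := by
  have dedekind : LinearIndependent L fun τ : L ≃ₐ[K] L => τ.toLinearMap :=
    (linearIndependent_toLinearMap K L L).comp (fun τ : L ≃ₐ[K] L => (τ : L →ₐ[K] L))
      AlgEquiv.coe_toAlgHom_injective
  have card_eq : Fintype.card (L ≃ₐ[K] L) = finrank L (L →ₗ[K] L) := by
    rw [finrank_linearMap_self, ← Nat.card_eq_fintype_card, IsGalois.card_aut_eq_finrank]
  refine eq_top_mono (span_mono ?_) (dedekind.span_eq_top_of_card_eq_finrank' card_eq)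
  rintro _ ⟨τ, rfl⟩
  obtain ⟨i, hi⟩ := mem_powers_iff_mem_zpowers.2 (hσ τ)
  exact ⟨i, congrArg _ hi⟩

/-- The restriction of `σ ^ i` to the `K`-subspace `V`, in the `L`-vector space `V →ₗ[K] L`. -/
def powRestrict (σ : L ≃ₐ[K] L) (V : Submodule K L) (i : ℕ) : V →ₗ[K] L :=
  (σ ^ i).toLinearMap.domRestrict V

theorem comp_powRestrict (V : Submodule K L) (i : ℕ) :
    σ.toLinearMap ∘ₗ powRestrict σ V i = powRestrict σ V (i + 1) := by
  ext
  simp [powRestrict, pow_succ']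

theorem span_range_powRestrict [FiniteDimensional K L] [IsGalois K L]
    (hσ : ∀ τ, τ ∈ Subgroup.zpowers σ) (V : Submodule K L) :
    span L (Set.range (powRestrict σ V)) = ⊤ := by
  refine eq_top_iff.2 fun φ _ => ?_
  obtain ⟨ψ, rfl⟩ := φ.exists_extend
  have mem_span : ψ ∈ span L (Set.range fun i : ℕ => (σ ^ i).toLinearMap) := by
    rw [span_range_pow_toLinearMap hσ]
    exact mem_top
  have mem_map := mem_map_of_mem (f := LinearMap.lcomp L L V.subtype) mem_span
  rwa [map_span, ← Set.range_comp] at mem_map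

theorem comp_mem_span_powRestrict {V : Submodule K L} {d : ℕ}
    (hd : powRestrict σ V d ∈ span L (Set.range fun i : Fin d => powRestrict σ V i))
    {φ : V →ₗ[K] L} (hφ : φ ∈ span L (Set.range fun i : Fin d => powRestrict σ V i)) :
    σ.toLinearMap ∘ₗ φ ∈ span L (Set.range fun i : Fin d => powRestrict σ V i) := by
  induction hφ using span_induction with
  | mem _ h =>
    obtain ⟨i, rfl⟩ := h
    rw [comp_powRestrict]
    obtain hlt | heq : (i : ℕ) + 1 < d ∨ (i : ℕ) + 1 = d := by lia
    · exact subset_span ⟨⟨i + 1, hlt⟩, rfl⟩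
    · rwa [heq]
  | zero => simp
  | add φ ψ _ _ hφ hψ => simpa only [LinearMap.comp_add] using add_mem hφ hψ
  | smul c φ _ hφ =>
    have comp_smul : σ.toLinearMap ∘ₗ (c • φ) = σ c • (σ.toLinearMap ∘ₗ φ) := by ext; simp
    exact comp_smul ▸ smul_mem _ _ hφ

theorem finrank_le_of_powRestrict_mem_span [FiniteDimensional K L] [IsGalois K L]
    (hσ : ∀ τ, τ ∈ Subgroup.zpowers σ) {V : Submodule K L} {d : ℕ}
    (hd : powRestrict σ V d ∈ span L (Set.range fun i : Fin d => powRestrict σ V i)) :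
    finrank K V ≤ d := by
  have mem_span (k : ℕ) :
      powRestrict σ V k ∈ span L (Set.range fun i : Fin d => powRestrict σ V i) := by
    induction k with
    | zero =>
      obtain rfl | hpos := d.eq_zero_or_pos
      · exact hd
      · exact subset_span ⟨⟨0, hpos⟩, rfl⟩
    | succ k ih => exact comp_powRestrict (σ := σ) V k ▸ comp_mem_span_powRestrict hd ih
  have span_eq_top : span L (Set.range fun i : Fin d => powRestrict σ V i) = ⊤ :=
    eq_top_mono (span_le.2 (Set.range_subset_iff.2 mem_span)) (span_range_powRestrict hσ V)
  calc finrank K V = finrank L (V →ₗ[K] L) := (finrank_linearMap_self K L V).symm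
    _ = finrank L (span L (Set.range fun i : Fin d => powRestrict σ V i)) := by
      rw [span_eq_top, finrank_top]
    _ ≤ Fintype.card (Fin d) := finrank_range_le_card _
    _ = d := Fintype.card_fin d

theorem linearIndependent_powRestrict [FiniteDimensional K L] [IsGalois K L]
    (hσ : ∀ τ, τ ∈ Subgroup.zpowers σ) {V : Submodule K L} {d : ℕ} (hd : d ≤ finrank K V) :
    LinearIndependent L fun i : Fin d => powRestrict σ V i := by
  induction d with
  | zero => exact linearIndependent_empty_type
  | succ d ih =>
    refine linearIndependent_finSucc'.2 ⟨ih (by lia), fun hmem => ?_⟩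
    have := finrank_le_of_powRestrict_mem_span hσ hmem
    lia

/-- The linearized polynomial `∑ i < d, c i * σ ^ i` with coefficient vector `c`, as an
endomorphism of `L`. -/
def linearizedPoly (σ : L ≃ₐ[K] L) {d : ℕ} : (Fin d → L) →ₗ[L] (L →ₗ[K] L) :=
  Fintype.linearCombination L fun i : Fin d => (σ ^ (i : ℕ)).toLinearMap

theorem linearizedPoly_apply {d : ℕ} (c : Fin d → L) (x : L) :
    linearizedPoly σ c x = ∑ i, c i * (σ ^ (i : ℕ)) x := by
  simp [linearizedPoly, Fintype.linearCombination_apply]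

theorem linearizedPoly_vecEmpty (x : L) : linearizedPoly σ ![] x = 0 := by
  simp [linearizedPoly_apply]

theorem linearizedPoly_vecCons {d : ℕ} (a : L) (c : Fin d → L) (x : L) :
    linearizedPoly σ (Matrix.vecCons a c) x = a * x + linearizedPoly σ c (σ x) := by
  simp [linearizedPoly_apply, Fin.sum_univ_succ]

theorem linearizedPoly_single_zero {d : ℕ} [NeZero d] :
    linearizedPoly σ (Pi.single (0 : Fin d) 1) = LinearMap.id := by
  simp [linearizedPoly, LinearMap.ext_iff]

theorem finrank_lt_of_le_ker_linearizedPoly [FiniteDimensional K L] [IsGalois K L]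
    (hσ : ∀ τ, τ ∈ Subgroup.zpowers σ) {d : ℕ} {c : Fin d → L} (hc : c ≠ 0)
    {V : Submodule K L} (hV : V ≤ LinearMap.ker (linearizedPoly σ c)) :
    finrank K V < d := by
  contrapose! hc
  refine funext <| Fintype.linearIndependent_iff.1 (linearIndependent_powRestrict hσ hc) c ?_
  ext x
  simpa [powRestrict, linearizedPoly_apply] using hV x.2

theorem pow_finrank_eq_one [FiniteDimensional K L] [IsGalois K L] (σ : L ≃ₐ[K] L) :
    σ ^ finrank K L = 1 := by
  rw [← IsGalois.card_aut_eq_finrank, pow_card_eq_one']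

-- `r` is the remainder of `σ ^ n` on right division by `c`, in the skew polynomial ring `L[σ]`.
theorem finrank_ker_linearizedPoly_eq_iff_remainder_eq_one [FiniteDimensional K L] [IsGalois K L]
    (hσ : ∀ τ, τ ∈ Subgroup.zpowers σ) {d e : ℕ} [NeZero d] (hn : finrank K L = e + d)
    {c : Fin (d + 1) → L} (hc : c ≠ 0) {g : Fin (e + 1) → L} (hg : g ≠ 0) {r : Fin d → L}
    (hdiv : linearizedPoly σ g ∘ₗ linearizedPoly σ c =
      (σ ^ (e + d)).toLinearMap - linearizedPoly σ r) :
    finrank K (LinearMap.ker (linearizedPoly σ c)) = d ↔ r = Pi.single 0 1 := by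
  have hdiv_id : linearizedPoly σ g ∘ₗ linearizedPoly σ c =
      LinearMap.id - linearizedPoly σ r := by
    rw [hdiv, ← hn, pow_finrank_eq_one]
    rfl
  constructor
  · intro hker
    by_contra hr
    have ker_le : LinearMap.ker (linearizedPoly σ c) ≤
        LinearMap.ker (linearizedPoly σ (Pi.single 0 1 - r)) := by
      rw [map_sub, linearizedPoly_single_zero, ← hdiv_id]
      exact LinearMap.ker_le_ker_comp _ _
    exact (finrank_lt_of_le_ker_linearizedPoly hσ (sub_ne_zero.2 (Ne.symm hr)) ker_le).ne hker
  · rintro rfl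
    rw [linearizedPoly_single_zero, sub_self] at hdiv_id
    have finrank_range_lt := finrank_lt_of_le_ker_linearizedPoly hσ hg
      (LinearMap.range_le_ker_iff.2 hdiv_id)
    have finrank_ker_lt := finrank_lt_of_le_ker_linearizedPoly hσ hc le_rfl
    have rank_nullity := (linearizedPoly σ c).finrank_range_add_finrank_ker
    lia

theorem algebraMap_norm_eq_prod_range [FiniteDimensional K L] [IsGalois K L]
    (hσ : ∀ τ, τ ∈ Subgroup.zpowers σ) (x : L) :
    algebraMap K L (Algebra.norm K x) = ∏ i ∈ Finset.range (finrank K L), (σ ^ i) x := by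
  classical
  rw [Algebra.norm_eq_prod_automorphisms, ← IsCyclic.image_range_card hσ, Finset.prod_image,
    IsGalois.card_aut_eq_finrank]
  rw [← orderOf_eq_card_of_forall_mem_zpowers hσ, Finset.coe_range]
  exact pow_injOn_Iio_orderOf

/-- The monic linearized polynomial `σ ^ 3 - b * σ - a`; the signs are those of the recurrence
`σ ^ 3 x = b * σ x + a * x` satisfied on its kernel. -/
def trinomial (σ : L ≃ₐ[K] L) (a b : L) : L →ₗ[K] L :=
  linearizedPoly σ ![-a, -b, 0, 1]

/-- The pairs `(a, b)` for which the kernel of `trinomial σ a b` has the largest dimension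
allowed by its degree. -/
def maxKernelPairs (σ : L ≃ₐ[K] L) : Set (L × L) :=
  {p | finrank K (LinearMap.ker (trinomial σ p.1 p.2)) = 3}

section Division

variable [FiniteDimensional K L] [IsGalois K L]

theorem mem_maxKernelPairs_iff_remainder_eq_one (hσ : ∀ τ, τ ∈ Subgroup.zpowers σ) {e : ℕ}
    (hn : finrank K L = e + 3) {a b r₀ r₁ r₂ : L} {g : Fin (e + 1) → L} (hg : g ≠ 0)
    (hdiv : ∀ x, linearizedPoly σ g (trinomial σ a b x) =
      (σ ^ (e + 3)) x - (r₀ * x + r₁ * σ x + r₂ * (σ ^ 2) x)) :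
    (a, b) ∈ maxKernelPairs σ ↔ r₀ = 1 ∧ r₁ = 0 ∧ r₂ = 0 := by
  have hc : ![-a, -b, 0, 1] ≠ 0 := fun h => by simpa using congrFun h 3
  have hcomp : linearizedPoly σ g ∘ₗ linearizedPoly σ ![-a, -b, 0, 1] =
      (σ ^ (e + 3)).toLinearMap - linearizedPoly σ ![r₀, r₁, r₂] := by
    ext x
    simpa [trinomial, linearizedPoly_apply (d := 3), Fin.sum_univ_three] using hdiv x
  refine (finrank_ker_linearizedPoly_eq_iff_remainder_eq_one hσ hn hc hg hcomp).trans ?_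
  simp [funext_iff, Fin.forall_fin_succ]

theorem maxKernelPairs_eq_empty_of_finrank_eq_four (hσ : ∀ τ, τ ∈ Subgroup.zpowers σ)
    (hn : finrank K L = 4) : maxKernelPairs σ = ∅ := by
  refine Set.eq_empty_of_forall_notMem fun ⟨a, b⟩ hab => ?_
  have quotient_ne_zero : ![0, (1 : L)] ≠ 0 := by simp
  have remainder := (mem_maxKernelPairs_iff_remainder_eq_one (e := 1) (r₀ := 0) (r₁ := σ a)
    (r₂ := σ b) hσ hn quotient_ne_zero fun x => by
      simp only [trinomial, linearizedPoly_vecCons, linearizedPoly_vecEmpty, map_add, map_neg,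
        map_mul, map_zero, map_one, AlgEquiv.coe_pow, Function.iterate_succ, Function.iterate_zero,
        Function.comp_apply, id_eq]
      ring).1 hab
  exact zero_ne_one remainder.1

theorem maxKernelPairs_eq_empty_of_finrank_eq_five (hσ : ∀ τ, τ ∈ Subgroup.zpowers σ)
    (hn : finrank K L = 5) : maxKernelPairs σ = ∅ := by
  refine Set.eq_empty_of_forall_notMem fun ⟨a, b⟩ hab => ?_
  have quotient_ne_zero : ![(σ ^ 2) b, 0, 1] ≠ 0 := by simp
  obtain ⟨h₀, -, h₂⟩ := (mem_maxKernelPairs_iff_remainder_eq_one (e := 2) (r₀ := a * (σ ^ 2) b)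
    (r₁ := b * (σ ^ 2) b) (r₂ := (σ ^ 2) a) hσ hn quotient_ne_zero fun x => by
      simp only [trinomial, linearizedPoly_vecCons, linearizedPoly_vecEmpty, map_add, map_neg,
        map_mul, map_zero, map_one, AlgEquiv.coe_pow, Function.iterate_succ, Function.iterate_zero,
        Function.comp_apply, id_eq]
      ring).1 hab
  rw [map_eq_zero] at h₂
  simp [h₂] at h₀

theorem maxKernelPairs_eq_of_finrank_eq_six (hσ : ∀ τ, τ ∈ Subgroup.zpowers σ)
    (hn : finrank K L = 6) :
    maxKernelPairs σ = {p | p.2 = 0 ∧ p.1 * (σ ^ 3) p.1 = 1} := by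
  ext ⟨a, b⟩
  have quotient_ne_zero : ![(σ ^ 3) a, (σ ^ 3) b, 0, 1] ≠ 0 := by simp
  rw [mem_maxKernelPairs_iff_remainder_eq_one (e := 3) (r₀ := a * (σ ^ 3) a)
    (r₁ := (σ ^ 3) a * b + σ a * (σ ^ 3) b) (r₂ := σ b * (σ ^ 3) b) hσ hn quotient_ne_zero
    fun x => by
      simp only [trinomial, linearizedPoly_vecCons, linearizedPoly_vecEmpty, map_add, map_neg,
        map_mul, map_zero, map_one, AlgEquiv.coe_pow, Function.iterate_succ, Function.iterate_zero,
        Function.comp_apply, id_eq]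
      ring]
  simp only [mul_eq_zero, map_eq_zero, or_self, Set.mem_ofPred_eq]
  constructor
  · rintro ⟨h₀, -, hb⟩
    exact ⟨hb, h₀⟩
  · rintro ⟨rfl, h₀⟩
    exact ⟨h₀, by simp, rfl⟩

theorem mem_maxKernelPairs_iff_of_finrank_eq_seven (hσ : ∀ τ, τ ∈ Subgroup.zpowers σ)
    (hn : finrank K L = 7) {a b : L} :
    (a, b) ∈ maxKernelPairs σ ↔ a * (σ ^ 2) b * (σ ^ 4) b = 1 ∧
      σ a * (σ ^ 4) a + b * (σ ^ 2) b * (σ ^ 4) b = 0 ∧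
      (σ ^ 4) a * σ b + (σ ^ 2) a * (σ ^ 4) b = 0 := by
  have quotient_ne_zero : ![(σ ^ 4) b * (σ ^ 2) b, (σ ^ 4) a, (σ ^ 4) b, 0, 1] ≠ 0 := by simp
  refine mem_maxKernelPairs_iff_remainder_eq_one (e := 4) hσ hn quotient_ne_zero fun x => ?_
  simp only [trinomial, linearizedPoly_vecCons, linearizedPoly_vecEmpty, map_add, map_neg,
    map_mul, map_zero, map_one, AlgEquiv.coe_pow, Function.iterate_succ, Function.iterate_zero,
    Function.comp_apply, id_eq]
  ring

theorem mem_maxKernelPairs_iff_of_finrank_eq_eight (hσ : ∀ τ, τ ∈ Subgroup.zpowers σ)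
    (hn : finrank K L = 8) {a b : L} :
    (a, b) ∈ maxKernelPairs σ ↔ a * ((σ ^ 5) a * (σ ^ 2) b + (σ ^ 3) a * (σ ^ 5) b) = 1 ∧
      b * ((σ ^ 5) a * (σ ^ 2) b + (σ ^ 3) a * (σ ^ 5) b) + σ a * (σ ^ 3) b * (σ ^ 5) b = 0 ∧
      (σ ^ 2) a * (σ ^ 5) a + σ b * (σ ^ 3) b * (σ ^ 5) b = 0 := by
  have quotient_ne_zero : ![(σ ^ 5) a * (σ ^ 2) b + (σ ^ 3) a * (σ ^ 5) b,
      (σ ^ 5) b * (σ ^ 3) b, (σ ^ 5) a, (σ ^ 5) b, 0, 1] ≠ 0 := by simp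
  refine mem_maxKernelPairs_iff_remainder_eq_one (e := 5) hσ hn quotient_ne_zero fun x => ?_
  simp only [trinomial, linearizedPoly_vecCons, linearizedPoly_vecEmpty, map_add, map_neg,
    map_mul, map_zero, map_one, AlgEquiv.coe_pow, Function.iterate_succ, Function.iterate_zero,
    Function.comp_apply, id_eq]
  ring

end Division

section SolveEquations

theorem pow_apply_pow_apply_of_pow_eq_one {n : ℕ} (hσn : σ ^ n = 1) (i j : ℕ) (x : L) :
    (σ ^ i) ((σ ^ j) x) = (σ ^ ((i + j) % n)) x := by
  rw [← AlgEquiv.mul_apply, ← pow_add, pow_eq_pow_mod _ hσn]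

/-- The roots of `t ^ 2 - t + 1`, i.e. the negatives of the primitive cube roots of unity when
`3 ≠ 0`, which `σ` interchanges: `1 - t` is the other root. -/
def swappedRoots (σ : L ≃ₐ[K] L) : Set L :=
  {t | t ^ 2 - t + 1 = 0 ∧ σ t = 1 - t}

theorem pow_apply_of_apply_eq_one_sub {t : L} (ht : σ t = 1 - t) (k : ℕ) :
    (σ ^ (2 * k)) t = t ∧ (σ ^ (2 * k + 1)) t = 1 - t := by
  have sq_apply : (σ ^ 2) t = t := by simp [pow_two, ht]
  have even_apply : (σ ^ (2 * k)) t = t := by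
    induction k with
    | zero => simp
    | succ k ih => rw [mul_add, pow_add, AlgEquiv.mul_apply, mul_one, sq_apply, ih]
  exact ⟨even_apply, by rw [pow_succ', AlgEquiv.mul_apply, even_apply, ht]⟩

variable [FiniteDimensional K L] [IsGalois K L]

theorem norm_eq_iff_prod_range_eq (hσ : ∀ τ, τ ∈ Subgroup.zpowers σ) {x : L} {k : K} :
    Algebra.norm K x = k ↔ ∏ i ∈ Finset.range (finrank K L), (σ ^ i) x = algebraMap K L k := by
  rw [← algebraMap_norm_eq_prod_range hσ, (algebraMap K L).injective.eq_iff]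

theorem conj_mul_eq_one_of_finrank_eq_seven (hn : finrank K L = 7) {a b : L}
    (h : a * (σ ^ 2) b * (σ ^ 4) b = 1) :
    σ a * (σ ^ 3) b * (σ ^ 5) b = 1 ∧ (σ ^ 2) a * (σ ^ 4) b * (σ ^ 6) b = 1 ∧
      (σ ^ 4) a * (σ ^ 6) b * σ b = 1 := by
  have shift := pow_apply_pow_apply_of_pow_eq_one (hn ▸ pow_finrank_eq_one σ)
  have conj (k : ℕ) :
      (σ ^ k) a * (σ ^ ((k + 2) % 7)) b * (σ ^ ((k + 4) % 7)) b = 1 := by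
    simpa only [map_mul, map_one, shift] using congrArg (σ ^ k) h
  simpa only [Nat.reduceAdd, Nat.reduceMod, pow_one] using ⟨conj 1, conj 2, conj 4⟩

theorem mem_maxKernelPairs_iff_norm_of_finrank_eq_seven (hσ : ∀ τ, τ ∈ Subgroup.zpowers σ)
    (hn : finrank K L = 7) {a b : L} :
    (a, b) ∈ maxKernelPairs σ ↔
      (2 : L) = 0 ∧ Algebra.norm K b = -1 ∧ a = ((σ ^ 2) b * (σ ^ 4) b)⁻¹ := by
  rw [mem_maxKernelPairs_iff_of_finrank_eq_seven hσ hn, norm_eq_iff_prod_range_eq hσ, hn]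
  simp only [Finset.prod_range_succ, Finset.prod_range_zero, pow_zero, pow_one,
    AlgEquiv.one_apply, one_mul, map_neg, map_one]
  constructor
  · rintro ⟨h₀, h₁, h₂⟩
    obtain ⟨conj₁, conj₂, conj₄⟩ := conj_mul_eq_one_of_finrank_eq_seven hn h₀
    refine ⟨?_, ?_, eq_inv_of_mul_eq_one_left (mul_assoc a _ _ ▸ h₀)⟩
    · linear_combination (σ ^ 6) b * h₂ - conj₄ - conj₂
    · linear_combination (σ ^ 3) b * (σ ^ 5) b * (σ ^ 6) b * σ b * h₁
        - (σ ^ 4) a * (σ ^ 6) b * σ b * conj₁ - conj₄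
  · rintro ⟨two_eq_zero, hnorm, rfl⟩
    have hb : b ≠ 0 := by
      rintro rfl
      simp at hnorm
    have hb' (k : ℕ) : (σ ^ k) b ≠ 0 := (map_ne_zero _).2 hb
    have h₀ : ((σ ^ 2) b * (σ ^ 4) b)⁻¹ * (σ ^ 2) b * (σ ^ 4) b = 1 := by
      rw [mul_assoc, inv_mul_cancel₀ (mul_ne_zero (hb' 2) (hb' 4))]
    obtain ⟨conj₁, conj₂, conj₄⟩ := conj_mul_eq_one_of_finrank_eq_seven hn h₀
    refine ⟨h₀, ?_, ?_⟩
    · apply mul_left_cancel₀ (mul_ne_zero (mul_ne_zero (hb' 3) (hb' 5))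
        (mul_ne_zero (hb' 6) (hb' 1)))
      simp only [pow_one]
      linear_combination hnorm +
        (σ ^ 4) ((σ ^ 2) b * (σ ^ 4) b)⁻¹ * (σ ^ 6) b * σ b * conj₁ + conj₄
    · apply mul_left_cancel₀ (hb' 6)
      linear_combination two_eq_zero + conj₄ + conj₂

theorem maxKernelPairs_eq_empty_of_finrank_eq_seven (hσ : ∀ τ, τ ∈ Subgroup.zpowers σ)
    (hn : finrank K L = 7) (two_ne_zero : (2 : L) ≠ 0) : maxKernelPairs σ = ∅ :=
  Set.eq_empty_of_forall_notMem fun _ h =>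
    two_ne_zero ((mem_maxKernelPairs_iff_norm_of_finrank_eq_seven hσ hn).1 h).1

theorem ncard_maxKernelPairs_of_finrank_eq_seven (hσ : ∀ τ, τ ∈ Subgroup.zpowers σ)
    (hn : finrank K L = 7) (two_eq_zero : (2 : L) = 0) :
    (maxKernelPairs σ).ncard = {b : L | Algebra.norm K b = 1}.ncard := by
  have neg_one_eq : (-1 : K) = 1 := (algebraMap K L).injective <| by
    simp only [map_neg, map_one]
    linear_combination -two_eq_zero
  have image_eq : maxKernelPairs σ =
      (fun b => (((σ ^ 2) b * (σ ^ 4) b)⁻¹, b)) '' {b : L | Algebra.norm K b = 1} := by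
    ext ⟨a, b⟩
    rw [mem_maxKernelPairs_iff_norm_of_finrank_eq_seven hσ hn, neg_one_eq]
    constructor
    · rintro ⟨-, hnorm, rfl⟩
      exact ⟨b, hnorm, rfl⟩
    · rintro ⟨b, hnorm, ⟨⟩⟩
      exact ⟨two_eq_zero, hnorm, rfl⟩
  rw [image_eq, Set.ncard_image_of_injective _ fun _ _ h => congrArg Prod.snd h]

theorem conj_mul_eq_of_finrank_eq_eight (hn : finrank K L = 8) {a b t : L} (ht : σ t = 1 - t)
    (hb : b * ((σ ^ 3) a * (σ ^ 6) a) = 1 - t) :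
    σ b * ((σ ^ 4) a * (σ ^ 7) a) = t ∧ (σ ^ 2) b * ((σ ^ 5) a * a) = 1 - t ∧
      (σ ^ 3) b * ((σ ^ 6) a * σ a) = t ∧ (σ ^ 5) b * (a * (σ ^ 3) a) = t := by
  have shift := pow_apply_pow_apply_of_pow_eq_one (hn ▸ pow_finrank_eq_one σ)
  have conj (k : ℕ) : (σ ^ k) b * ((σ ^ ((k + 3) % 8)) a * (σ ^ ((k + 6) % 8)) a) =
      1 - (σ ^ k) t := by
    simpa only [map_mul, map_one, map_sub, shift] using congrArg (σ ^ k) hb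
  have ht₂ : (σ ^ 2) t = t := (pow_apply_of_apply_eq_one_sub ht 1).1
  have ht₃ : (σ ^ 3) t = 1 - t := (pow_apply_of_apply_eq_one_sub ht 1).2
  have ht₅ : (σ ^ 5) t = 1 - t := (pow_apply_of_apply_eq_one_sub ht 2).2
  have conjs := And.intro (conj 1) (And.intro (conj 2) (And.intro (conj 3) (conj 5)))
  simpa only [Nat.reduceAdd, Nat.reduceMod, pow_zero, pow_one, AlgEquiv.one_apply, ht, ht₂, ht₃,
    ht₅, sub_sub_cancel] using conjs

theorem mem_maxKernelPairs_iff_of_mul_eq_one_sub (hσ : ∀ τ, τ ∈ Subgroup.zpowers σ)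
    (hn : finrank K L = 8) {a b t : L} (ha : a ≠ 0) (ht : σ t = 1 - t)
    (hb : b * ((σ ^ 3) a * (σ ^ 6) a) = 1 - t) :
    (a, b) ∈ maxKernelPairs σ ↔ t ^ 2 - t + 1 = 0 ∧ Algebra.norm K a = 1 := by
  obtain ⟨conj₁, conj₂, conj₃, conj₅⟩ := conj_mul_eq_of_finrank_eq_eight hn ht hb
  have ha' (k : ℕ) : (σ ^ k) a ≠ 0 := (map_ne_zero _).2 ha
  have h₀ : a * ((σ ^ 5) a * (σ ^ 2) b + (σ ^ 3) a * (σ ^ 5) b) = 1 := by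
    linear_combination conj₂ + conj₅
  have h₁ : b * ((σ ^ 5) a * (σ ^ 2) b + (σ ^ 3) a * (σ ^ 5) b) + σ a * (σ ^ 3) b * (σ ^ 5) b = 0 ↔
      t ^ 2 - t + 1 = 0 := by
    rw [← mul_eq_zero_iff_right (mul_ne_zero ha (mul_ne_zero (ha' 3) (ha' 6)))]
    refine iff_of_eq (congrArg (· = 0) ?_)
    linear_combination b * ((σ ^ 3) a * (σ ^ 6) a) * h₀ + hb +
      (σ ^ 5) b * (a * (σ ^ 3) a) * conj₃ + t * conj₅
  have h₂ : (σ ^ 2) a * (σ ^ 5) a + σ b * (σ ^ 3) b * (σ ^ 5) b = 0 ↔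
      ∏ i ∈ Finset.range 8, (σ ^ i) a + t ^ 3 = 0 := by
    have ne_zero : a * (σ ^ 1) a * (σ ^ 3) a * (σ ^ 4) a * (σ ^ 6) a * (σ ^ 7) a ≠ 0 := by
      simp only [ne_eq, mul_eq_zero, ha, ha', or_self, not_false_eq_true]
    rw [← mul_eq_zero_iff_right ne_zero]
    refine iff_of_eq (congrArg (· = 0) ?_)
    simp only [Finset.prod_range_succ, Finset.prod_range_zero, pow_zero, pow_one,
      AlgEquiv.one_apply, one_mul]
    linear_combination (σ ^ 3) b * ((σ ^ 6) a * σ a) * ((σ ^ 5) b * (a * (σ ^ 3) a)) * conj₁ +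
      t * ((σ ^ 5) b * (a * (σ ^ 3) a)) * conj₃ + t ^ 2 * conj₅
  rw [mem_maxKernelPairs_iff_of_finrank_eq_eight hσ hn, norm_eq_iff_prod_range_eq hσ, hn, map_one,
    h₁, h₂]
  refine (and_iff_right h₀).trans (and_congr_right fun hroot => ?_)
  have cube_eq : t ^ 3 = -1 := by linear_combination (t + 1) * hroot
  rw [cube_eq, ← sub_eq_add_neg, sub_eq_zero]

theorem apply_eq_one_sub_of_mem_maxKernelPairs (hσ : ∀ τ, τ ∈ Subgroup.zpowers σ)
    (hn : finrank K L = 8) {a b : L} (hab : (a, b) ∈ maxKernelPairs σ) :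
    σ (a * (σ ^ 3) a * (σ ^ 5) b) = 1 - a * (σ ^ 3) a * (σ ^ 5) b := by
  set t := a * (σ ^ 3) a * (σ ^ 5) b with t_def
  have shift := pow_apply_pow_apply_of_pow_eq_one (hn ▸ pow_finrank_eq_one σ)
  have h₀ := ((mem_maxKernelPairs_iff_of_finrank_eq_eight hσ hn).1 hab).1
  have ht₅ : (σ ^ 5) t = 1 - t := by
    simp only [t_def, map_mul, shift, Nat.reduceAdd, Nat.reduceMod, pow_zero, AlgEquiv.one_apply]
    linear_combination h₀
  have ht₂ : (σ ^ 2) t = t := by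
    calc (σ ^ 2) t = (σ ^ 5) ((σ ^ 5) t) := (shift 5 5 t).symm
      _ = t := by rw [ht₅, map_sub, map_one, ht₅, sub_sub_cancel]
  calc σ t = σ ((σ ^ 2) ((σ ^ 2) t)) := by rw [ht₂, ht₂]
    _ = (σ ^ 5) t := by simp
    _ = 1 - t := ht₅

theorem mem_maxKernelPairs_iff_exists_of_finrank_eq_eight (hσ : ∀ τ, τ ∈ Subgroup.zpowers σ)
    (hn : finrank K L = 8) {a b : L} :
    (a, b) ∈ maxKernelPairs σ ↔ ∃ t ∈ swappedRoots σ,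
      Algebra.norm K a = 1 ∧ b = (1 - t) / ((σ ^ 3) a * (σ ^ 6) a) := by
  constructor
  · intro hab
    have ha : a ≠ 0 := by
      rintro rfl
      simp [mem_maxKernelPairs_iff_of_finrank_eq_eight hσ hn] at hab
    have ht := apply_eq_one_sub_of_mem_maxKernelPairs hσ hn hab
    have hb : b * ((σ ^ 3) a * (σ ^ 6) a) = 1 - a * (σ ^ 3) a * (σ ^ 5) b := by
      have shift := pow_apply_pow_apply_of_pow_eq_one (hn ▸ pow_finrank_eq_one σ)
      have ht₃ := (pow_apply_of_apply_eq_one_sub ht 1).2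
      simp only [map_mul, shift, Nat.reduceAdd, Nat.reduceMul, Nat.reduceMod, pow_zero,
        AlgEquiv.one_apply] at ht₃
      linear_combination ht₃
    obtain ⟨hroot, hnorm⟩ := (mem_maxKernelPairs_iff_of_mul_eq_one_sub hσ hn ha ht hb).1 hab
    refine ⟨_, ⟨hroot, ht⟩, hnorm, (eq_div_iff ?_).2 hb⟩
    simp [ha]
  · rintro ⟨t, ⟨hroot, ht⟩, hnorm, rfl⟩
    have ha : a ≠ 0 := by
      rintro rfl
      simp at hnorm
    refine (mem_maxKernelPairs_iff_of_mul_eq_one_sub hσ hn ha ht ?_).2 ⟨hroot, hnorm⟩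
    exact div_mul_cancel₀ _ (by simp [ha])

theorem ncard_maxKernelPairs_of_finrank_eq_eight (hσ : ∀ τ, τ ∈ Subgroup.zpowers σ)
    (hn : finrank K L = 8) :
    (maxKernelPairs σ).ncard =
      (swappedRoots σ).ncard * {a : L | Algebra.norm K a = 1}.ncard := by
  have image_eq : maxKernelPairs σ =
      (fun z : L × L => (z.2, (1 - z.1) / ((σ ^ 3) z.2 * (σ ^ 6) z.2))) ''
        swappedRoots σ ×ˢ {a | Algebra.norm K a = 1} := by
    ext ⟨a, b⟩
    rw [mem_maxKernelPairs_iff_exists_of_finrank_eq_eight hσ hn]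
    constructor
    · rintro ⟨t, ht, hnorm, rfl⟩
      exact ⟨(t, a), ⟨ht, hnorm⟩, rfl⟩
    · rintro ⟨⟨t, a⟩, ⟨ht, hnorm⟩, ⟨⟩⟩
      exact ⟨t, ht, hnorm, rfl⟩
  rw [image_eq, Set.InjOn.ncard_image, Set.ncard_prod]
  rintro ⟨t, a⟩ ⟨-, hnorm⟩ ⟨t', a'⟩ - h
  simp only [Prod.mk.injEq] at h
  obtain ⟨rfl, hdiv⟩ := h
  have ha : a ≠ 0 := by
    rintro rfl
    simp at hnorm
  have ne_zero : (σ ^ 3) a * (σ ^ 6) a ≠ 0 :=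
    mul_ne_zero ((map_ne_zero _).2 ha) ((map_ne_zero _).2 ha)
  rw [div_left_inj' ne_zero, sub_right_inj] at hdiv
  rw [hdiv]

end SolveEquations

theorem leadingCoeff_ne_zero_of_finrank_ker_eq_three [FiniteDimensional K L] [IsGalois K L]
    (hσ : ∀ τ, τ ∈ Subgroup.zpowers σ) (hn : finrank K L ≠ 3) {c₀ c₁ c₃ : L}
    (hker : finrank K (LinearMap.ker (linearizedPoly σ ![c₀, c₁, 0, c₃])) = 3) : c₃ ≠ 0 := by
  rintro rfl
  have truncate : linearizedPoly σ ![c₀, c₁, 0, 0] = linearizedPoly σ ![c₀, c₁, 0] := by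
    ext x
    simp [linearizedPoly_apply, Fin.sum_univ_succ]
  rw [truncate] at hker
  by_cases hc : ![c₀, c₁, 0] = 0
  · rw [hc, map_zero, LinearMap.ker_zero, finrank_top] at hker
    exact hn hker
  · exact (finrank_lt_of_le_ker_linearizedPoly hσ hc le_rfl).ne hker

theorem ker_linearizedPoly_smul {d : ℕ} {u : L} (hu : u ≠ 0) (c : Fin d → L) :
    LinearMap.ker (linearizedPoly σ (u • c)) = LinearMap.ker (linearizedPoly σ c) := by
  ext x
  simp [hu]

theorem setOf_finrank_ker_eq_three_eq_image [FiniteDimensional K L] [IsGalois K L]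
    (hσ : ∀ τ, τ ∈ Subgroup.zpowers σ) (hn : finrank K L ≠ 3) :
    {c : L × L × L |
      finrank K (LinearMap.ker (linearizedPoly σ ![c.1, c.2.1, 0, c.2.2])) = 3} =
      (fun z : Lˣ × L × L => (-(z.1 * z.2.1), -(z.1 * z.2.2), (z.1 : L))) ''
        Set.univ ×ˢ maxKernelPairs σ := by
  have ker_scale (u : Lˣ) (a b : L) :
      LinearMap.ker (linearizedPoly σ ![-(u * a), -(u * b), 0, (u : L)]) =
        LinearMap.ker (trinomial σ a b) := by
    rw [trinomial, ← ker_linearizedPoly_smul u.ne_zero ![-a, -b, 0, 1]]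
    simp
  ext ⟨c₀, c₁, c₃⟩
  constructor
  · intro hker
    lift c₃ to Lˣ using
      (leadingCoeff_ne_zero_of_finrank_ker_eq_three hσ hn hker).isUnit with u
    obtain ⟨a, rfl⟩ : ∃ a, -(u * a) = c₀ := ⟨-(u⁻¹ * c₀), by simp⟩
    obtain ⟨b, rfl⟩ : ∃ b, -(u * b) = c₁ := ⟨-(u⁻¹ * c₁), by simp⟩
    rw [Set.mem_ofPred_eq, ker_scale] at hker
    exact ⟨(u, a, b), ⟨Set.mem_univ _, hker⟩, rfl⟩
  · rintro ⟨⟨u, a, b⟩, ⟨-, hab⟩, ⟨⟩⟩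
    rw [Set.mem_ofPred_eq, ker_scale]
    exact hab

theorem weightCount3_eq_mul_ncard_maxKernelPairs [FiniteDimensional K L] [IsGalois K L]
    (hσ : ∀ τ, τ ∈ Subgroup.zpowers σ) (hn : finrank K L ≠ 3) :
    weightCount3 K L σ = (Nat.card L - 1) * (maxKernelPairs σ).ncard := by
  have map_eq (c : L × L × L) :
      LinearMap.mulLeft K c.1 + LinearMap.mulLeft K c.2.1 ∘ₗ σ.toLinearMap
        + LinearMap.mulLeft K c.2.2 ∘ₗ (σ ^ 3).toLinearMap =
        linearizedPoly σ ![c.1, c.2.1, 0, c.2.2] := by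
    ext x
    simp [linearizedPoly_apply, Fin.sum_univ_four]
  have scale_injective : Function.Injective
      fun z : Lˣ × L × L => (-(z.1 * z.2.1), -(z.1 * z.2.2), (z.1 : L)) := by
    rintro ⟨u, a, b⟩ ⟨v, a', b'⟩ h
    simp only [Prod.mk.injEq, neg_inj, Units.val_inj] at h
    obtain ⟨h₀, h₁, rfl⟩ := h
    rw [u.mul_right_inj.1 h₀, u.mul_right_inj.1 h₁]
  calc weightCount3 K L σ = {c : L × L × L |
        finrank K (LinearMap.ker (linearizedPoly σ ![c.1, c.2.1, 0, c.2.2])) = 3}.ncard :=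
      Nat.card_congr (Equiv.subtypeEquivRight fun c => by rw [map_eq c, Set.mem_ofPred_eq])
    _ = (Set.univ ×ˢ maxKernelPairs σ : Set (Lˣ × L × L)).ncard := by
      rw [setOf_finrank_ker_eq_three_eq_image hσ hn,
        Set.ncard_image_of_injective _ scale_injective]
    _ = (Nat.card L - 1) * (maxKernelPairs σ).ncard := by
      rw [Set.ncard_prod, Set.ncard_univ, Nat.card_units]

end CyclicExtension

section FiniteField

theorem ncard_setOf_pow_eq_one {F : Type*} [Field F] [Finite F] {m : ℕ} (hm : m ≠ 0) :
    {x : F | x ^ m = 1}.ncard = (Nat.card F - 1).gcd m := by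
  have image_eq : {x : F | x ^ m = 1} =
      Units.val '' ((powMonoidHom m : Fˣ →* Fˣ).ker : Set Fˣ) := by
    ext x
    constructor
    · intro hx
      lift x to Fˣ using IsUnit.of_pow_eq_one hx hm
      exact ⟨x, Units.ext hx, rfl⟩
    · rintro ⟨u, hu, rfl⟩
      exact congrArg Units.val hu
  rw [image_eq, Set.ncard_image_of_injective _ Units.val_injective, ← Nat.card_units]
  exact IsCyclic.card_powMonoidHom_ker Fˣ m

theorem natCast_eq_zero_iff_dvd_card {F : Type*} [Field F] [Finite F] {r : ℕ} (hr : r.Prime) :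
    (r : F) = 0 ↔ r ∣ Nat.card F := by
  have := Fintype.ofFinite F
  have := Fact.mk hr
  rw [Nat.card_eq_fintype_card, ← prime_dvd_char_iff_dvd_card, ringChar.spec,
    Nat.prime_dvd_prime_iff_eq hr (CharP.char_is_prime F (ringChar F)),
    Nat.prime_dvd_prime_iff_eq (CharP.char_is_prime F (ringChar F)) hr, eq_comm]

theorem setOf_sq_sub_add_one_eq_zero_eq_image_neg {F : Type*} [Field F]
    (three_ne_zero : (3 : F) ≠ 0) :
    {t : F | t ^ 2 - t + 1 = 0} = Neg.neg '' ({w | w ^ 3 = 1} \ {1}) := by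
  ext t
  simp only [Set.image_neg_eq_neg, Set.mem_neg, Set.mem_sdiff, Set.mem_ofPred_eq,
    Set.mem_singleton_iff]
  constructor
  · intro hroot
    refine ⟨by linear_combination -(t + 1) * hroot, fun h => three_ne_zero ?_⟩
    linear_combination hroot + (t - 2) * h
  · rintro ⟨hcube, hne⟩
    apply mul_left_cancel₀ (sub_ne_zero.2 hne)
    linear_combination hcube

variable {K L : Type*} [Field K] [Field L] [Algebra K L] {σ : L ≃ₐ[K] L}

theorem pow_apply_eq_pow {m : ℕ} (hσ : ∀ x, σ x = x ^ m) (i : ℕ) (x : L) :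
    (σ ^ i) x = x ^ m ^ i := by
  rw [AlgEquiv.coe_pow, funext hσ, pow_iterate]

theorem apply_eq_pow_mod_three_of_root {m : ℕ} (hσ : ∀ x, σ x = x ^ m) {t : L}
    (ht : t ^ 2 - t + 1 = 0) : σ t = -(-t) ^ (m % 3) := by
  have cube_eq_one : (-t) ^ 3 = 1 := by linear_combination -(t + 1) * ht
  rw [← pow_eq_pow_mod _ cube_eq_one, ← hσ, map_neg, neg_neg]

theorem swappedRoots_eq_empty {m : ℕ} (hσ : ∀ x, σ x = x ^ m) (hm : m % 3 = 1)
    (three_ne_zero : (3 : L) ≠ 0) : swappedRoots σ = ∅ := by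
  refine Set.eq_empty_of_forall_notMem fun t ⟨hroot, ht⟩ => three_ne_zero ?_
  rw [apply_eq_pow_mod_three_of_root hσ hroot, hm, pow_one, neg_neg] at ht
  linear_combination 4 * hroot - (2 * t - 1) * ht

theorem swappedRoots_eq_singleton (three_eq_zero : (3 : L) = 0) : swappedRoots σ = {-1} := by
  ext t
  constructor
  · rintro ⟨hroot, -⟩
    have sq_eq_zero : (t + 1) ^ 2 = 0 := by linear_combination hroot + t * three_eq_zero
    exact eq_neg_of_add_eq_zero_left (pow_eq_zero_iff two_ne_zero |>.1 sq_eq_zero)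
  · rintro rfl
    refine ⟨by linear_combination three_eq_zero, ?_⟩
    rw [map_neg, map_one]
    linear_combination -three_eq_zero

theorem swappedRoots_eq_setOf_root {m : ℕ} (hσ : ∀ x, σ x = x ^ m) (hm : m % 3 = 2) :
    swappedRoots σ = {t | t ^ 2 - t + 1 = 0} := by
  refine Set.Subset.antisymm (fun t ht => ht.1) fun t (hroot : t ^ 2 - t + 1 = 0) => ⟨hroot, ?_⟩
  rw [apply_eq_pow_mod_three_of_root hσ hroot, hm]
  linear_combination -hroot

variable [Finite L]

theorem ncard_swappedRoots_eq_two {m : ℕ} (hσ : ∀ x, σ x = x ^ m) (hm : m % 3 = 2)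
    (hcard : 3 ∣ Nat.card L - 1) : (swappedRoots σ).ncard = 2 := by
  have three_ne_zero : (3 : L) ≠ 0 := by
    rw [← Nat.cast_ofNat, Ne, natCast_eq_zero_iff_dvd_card Nat.prime_three]
    have := Finite.one_lt_card (α := L)
    lia
  rw [swappedRoots_eq_setOf_root hσ hm, setOf_sq_sub_add_one_eq_zero_eq_image_neg three_ne_zero,
    Set.ncard_image_of_injective _ neg_injective,
    Set.ncard_sdiff_singleton_of_mem (Set.mem_ofPred_eq ▸ one_pow 3),
    ncard_setOf_pow_eq_one (by norm_num), Nat.gcd_eq_right hcard]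

theorem ncard_setOf_norm_eq_one :
    {x : L | Algebra.norm K x = 1}.ncard = (Nat.card L - 1) / (Nat.card K - 1) := by
  have := Finite.of_injective _ (algebraMap K L).injective
  have dvd : Nat.card K - 1 ∣ Nat.card L - 1 := by
    rw [natCard_eq_pow_finrank (K := K) (V := L)]
    exact Nat.sub_one_dvd_pow_sub_one _ _
  have pos : (Nat.card L - 1) / (Nat.card K - 1) ≠ 0 :=
    (Nat.div_ne_zero_iff_of_dvd dvd).2
      ⟨(Nat.sub_pos_of_lt Finite.one_lt_card).ne', (Nat.sub_pos_of_lt Finite.one_lt_card).ne'⟩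
  calc {x : L | Algebra.norm K x = 1}.ncard
    _ = {x : L | x ^ ((Nat.card L - 1) / (Nat.card K - 1)) = 1}.ncard := by
      simp only [← FiniteField.algebraMap_norm_eq_pow, FaithfulSMul.algebraMap_eq_one_iff]
    _ = (Nat.card L - 1) / (Nat.card K - 1) := by
      rw [ncard_setOf_pow_eq_one pos, Nat.gcd_eq_right (Nat.div_dvd_of_dvd dvd)]

theorem mem_zpowers_of_forall_apply_eq_pow {s : ℕ} (hs : s.Coprime (finrank K L))
    (hσ : ∀ x, σ x = x ^ Nat.card K ^ s) (τ : L ≃ₐ[K] L) : τ ∈ Subgroup.zpowers σ := by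
  have := Finite.of_injective _ (algebraMap K L).injective
  have := Fintype.ofFinite K
  have σ_eq : σ = FiniteField.frobeniusAlgEquivOfAlgebraic K L ^ s := by
    ext x
    rw [hσ, AlgEquiv.coe_pow, FiniteField.coe_frobeniusAlgEquivOfAlgebraic_iterate,
      Nat.card_eq_fintype_card]
  have orderOf_eq : orderOf σ = finrank K L := by
    rw [σ_eq, Nat.Coprime.orderOf_pow, FiniteField.orderOf_frobeniusAlgEquivOfAlgebraic]
    rw [FiniteField.orderOf_frobeniusAlgEquivOfAlgebraic]
    exact hs.symm
  have zpowers_eq_top : Subgroup.zpowers σ = ⊤ := Subgroup.eq_top_of_card_eq _ <| by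
    rw [Nat.card_zpowers, orderOf_eq, IsGalois.card_aut_eq_finrank]
  exact zpowers_eq_top ▸ Subgroup.mem_top τ

theorem pow_three_apply_of_finrank_eq_six {s : ℕ} (hs : s.Coprime 6)
    (hσ : ∀ x, σ x = x ^ Nat.card K ^ s) (hn : finrank K L = 6) (x : L) :
    (σ ^ 3) x = x ^ Nat.card K ^ 3 := by
  have := Fintype.ofFinite L
  have hcard : Nat.card K ^ 6 = Fintype.card L := by
    rw [← Nat.card_eq_fintype_card, ← hn, natCard_eq_pow_finrank (K := K) (V := L)]
  obtain ⟨k, rfl⟩ : Odd s := Nat.coprime_two_right.1 (hs.coprime_dvd_right (by norm_num))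
  calc (σ ^ 3) x = x ^ ((Nat.card K ^ 6) ^ k * Nat.card K ^ 3) := by
        rw [pow_apply_eq_pow hσ]
        ring_nf
    _ = x ^ Nat.card K ^ 3 := by rw [pow_mul, hcard, FiniteField.pow_card_pow]

theorem ncard_maxKernelPairs_of_finrank_eq_six {s : ℕ} (hs : s.Coprime 6)
    (hσ : ∀ x, σ x = x ^ Nat.card K ^ s) (hn : finrank K L = 6) :
    (maxKernelPairs σ).ncard = Nat.card K ^ 3 + 1 := by
  have hgen := mem_zpowers_of_forall_apply_eq_pow (hn ▸ hs) hσ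
  have image_eq : maxKernelPairs σ =
      (fun a => (a, 0)) '' {a : L | a ^ (Nat.card K ^ 3 + 1) = 1} := by
    ext ⟨a, b⟩
    simp only [maxKernelPairs_eq_of_finrank_eq_six hgen hn,
      pow_three_apply_of_finrank_eq_six hs hσ hn, ← pow_succ']
    simp [and_comm, eq_comm]
  have dvd : Nat.card K ^ 3 + 1 ∣ Nat.card L - 1 := by
    rw [natCard_eq_pow_finrank (K := K) (V := L), hn]
    exact ⟨Nat.card K ^ 3 - 1, by rw [← Nat.sq_sub_sq, ← pow_mul, one_pow]⟩
  rw [image_eq, Set.ncard_image_of_injective _ (Prod.mk_left_injective 0),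
    ncard_setOf_pow_eq_one (Nat.succ_ne_zero _), Nat.gcd_eq_right dvd]

theorem finrank_eq_of_card_eq_pow {n : ℕ} (hcard : Nat.card L = Nat.card K ^ n) :
    finrank K L = n := by
  have := Finite.of_injective _ (algebraMap K L).injective
  have pow_eq : Nat.card K ^ finrank K L = Nat.card K ^ n := by
    rw [← hcard, natCard_eq_pow_finrank (K := K) (V := L)]
  exact Nat.pow_right_injective (Finite.one_lt_card (α := K)) pow_eq

theorem natCast_eq_zero_iff_dvd_card_base {r : ℕ} (hr : r.Prime) :
    (r : L) = 0 ↔ r ∣ Nat.card K := by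
  have := Finite.of_injective _ (algebraMap K L).injective
  rw [← map_natCast (algebraMap K L), map_eq_zero, natCast_eq_zero_iff_dvd_card hr]

theorem ncard_swappedRoots_of_card_mod_three_eq_zero (hq : Nat.card K % 3 = 0) :
    (swappedRoots σ).ncard = 1 := by
  have three_eq_zero : (3 : L) = 0 := by
    exact_mod_cast (natCast_eq_zero_iff_dvd_card_base (K := K) Nat.prime_three).2
      (Nat.dvd_of_mod_eq_zero hq)
  rw [swappedRoots_eq_singleton three_eq_zero, Set.ncard_singleton]

theorem ncard_swappedRoots_of_card_mod_three_eq_one {s : ℕ}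
    (hσ : ∀ x, σ x = x ^ Nat.card K ^ s) (hq : Nat.card K % 3 = 1) :
    (swappedRoots σ).ncard = 0 := by
  have three_ne_zero : (3 : L) ≠ 0 := fun h => by
    have := (natCast_eq_zero_iff_dvd_card_base (K := K) (L := L) Nat.prime_three).1
      (by exact_mod_cast h)
    lia
  have hm : Nat.card K ^ s % 3 = 1 := by rw [Nat.pow_mod, hq, one_pow, Nat.one_mod]
  rw [swappedRoots_eq_empty hσ hm three_ne_zero, Set.ncard_empty]

theorem ncard_swappedRoots_of_card_mod_three_eq_two {s : ℕ} (hs : Odd s)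
    (hσ : ∀ x, σ x = x ^ Nat.card K ^ s) (hn : Even (finrank K L)) (hq : Nat.card K % 3 = 2) :
    (swappedRoots σ).ncard = 2 := by
  have sq_modEq : Nat.card K ^ 2 ≡ 1 [MOD 3] := by
    rw [Nat.ModEq, Nat.pow_mod, hq]
  have hm : Nat.card K ^ s % 3 = 2 := by
    obtain ⟨k, rfl⟩ := hs
    have pow_modEq := (sq_modEq.pow k).mul_right (Nat.card K)
    rwa [one_pow, one_mul, ← pow_mul, ← pow_succ, Nat.ModEq, hq] at pow_modEq
  have hcard : 3 ∣ Nat.card L - 1 := by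
    obtain ⟨k, hk⟩ := hn.two_dvd
    have sq_pos : 0 < Nat.card K ^ 2 := pow_pos (by lia) 2
    rw [natCard_eq_pow_finrank (K := K) (V := L), hk, pow_mul]
    have pow_modEq : 1 ≡ (Nat.card K ^ 2) ^ k [MOD 3] := one_pow (M := ℕ) k ▸ (sq_modEq.pow k).symm
    exact (Nat.modEq_iff_dvd' (Nat.one_le_pow _ _ sq_pos)).1 pow_modEq
  exact ncard_swappedRoots_eq_two hσ hm hcard

theorem weightCount3_eq_ncard_mul_of_finrank_eq_eight (hσ : ∀ τ, τ ∈ Subgroup.zpowers σ)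
    (hn : finrank K L = 8) :
    weightCount3 K L σ =
      (swappedRoots σ).ncard * ((Nat.card K ^ 8 - 1) ^ 2 / (Nat.card K - 1)) := by
  rw [weightCount3_eq_mul_ncard_maxKernelPairs hσ (by lia), sq,
    ncard_maxKernelPairs_of_finrank_eq_eight hσ hn, ncard_setOf_norm_eq_one,
    natCard_eq_pow_finrank (K := K) (V := L), hn,
    Nat.mul_div_assoc _ (Nat.sub_one_dvd_pow_sub_one _ _), mul_left_comm]

theorem weightCount3_of_finrank_eq_seven_of_two_eq_zero (hσ : ∀ τ, τ ∈ Subgroup.zpowers σ)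
    (hn : finrank K L = 7) (two_eq_zero : (2 : L) = 0) :
    weightCount3 K L σ = (Nat.card K ^ 7 - 1) ^ 2 / (Nat.card K - 1) := by
  rw [weightCount3_eq_mul_ncard_maxKernelPairs hσ (by lia), sq,
    ncard_maxKernelPairs_of_finrank_eq_seven hσ hn two_eq_zero, ncard_setOf_norm_eq_one,
    natCard_eq_pow_finrank (K := K) (V := L), hn,
    Nat.mul_div_assoc _ (Nat.sub_one_dvd_pow_sub_one _ _)]

end FiniteField

/-- (Corollary `cor:C3n`.) With `σ : x ↦ x^{q^s}`, `gcd(s,n) = 1`, a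
generator of `Gal(F_{q^n}/F_q)`, and `D` the number of codewords of rank weight `n-3` in
`⟨x, x^σ, x^{σ³}⟩_{F_{q^n}}`: `D = 0` for `n ∈ {4,5}`; `D = (q⁶-1)(q³+1)` for `n = 6`;
for `n = 7`, `D = 0` if `q` is odd and `D = (q⁷-1)²/(q-1)` if `q` is even; for `n = 8`,
`D = 0` if `q ≡ 1 (mod 3)`, `D = (q⁸-1)²/(q-1)` if `q ≡ 0 (mod 3)`, and
`D = 2(q⁸-1)²/(q-1)` if `q ≡ 2 (mod 3)`. -/
theorem stmt_15 (p q : ℕ) (hp : p.Prime) (hq : ∃ m : ℕ, 0 < m ∧ q = p ^ m)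
    (K L : Type*) [Field K] [Field L] [Fintype K] [Fintype L] [Algebra K L]
    (hcardK : Fintype.card K = q)
    (n : ℕ) (hn : 0 < n) (hcardL : Fintype.card L = q ^ n)
    (s : ℕ) (hs : 0 < s) (hsn : Nat.gcd s n = 1)
    (σ : L ≃ₐ[K] L) (hσ : ∀ x : L, σ x = x ^ q ^ s) :
    (n = 4 → weightCount3 K L σ = 0)
      ∧ (n = 5 → weightCount3 K L σ = 0)
      ∧ (n = 6 → weightCount3 K L σ = (q ^ 6 - 1) * (q ^ 3 + 1))
      ∧ (n = 7 →
          (Odd q → weightCount3 K L σ = 0)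
            ∧ (Even q → weightCount3 K L σ = (q ^ 7 - 1) ^ 2 / (q - 1)))
      ∧ (n = 8 →
          (q % 3 = 1 → weightCount3 K L σ = 0)
            ∧ (q % 3 = 0 → weightCount3 K L σ = (q ^ 8 - 1) ^ 2 / (q - 1))
            ∧ (q % 3 = 2 → weightCount3 K L σ = 2 * ((q ^ 8 - 1) ^ 2 / (q - 1)))) := by
  simp only [← Nat.card_eq_fintype_card] at hcardK hcardL
  subst hcardK
  obtain rfl := finrank_eq_of_card_eq_pow hcardL
  have hgen := mem_zpowers_of_forall_apply_eq_pow hsn hσ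
  have hcount : finrank K L ≠ 3 → weightCount3 K L σ =
      (Nat.card K ^ finrank K L - 1) * (maxKernelPairs σ).ncard :=
    fun h => hcardL ▸ weightCount3_eq_mul_ncard_maxKernelPairs hgen h
  have two_eq_zero_iff : (2 : L) = 0 ↔ Even (Nat.card K) := by
    rw [even_iff_two_dvd, ← natCast_eq_zero_iff_dvd_card_base (L := L) Nat.prime_two,
      Nat.cast_ofNat]
  have eq_zero (hne : finrank K L ≠ 3) (hempty : maxKernelPairs σ = ∅) :
      weightCount3 K L σ = 0 := by
    rw [hcount hne, hempty, Set.ncard_empty, mul_zero]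
  refine ⟨fun h4 => eq_zero (by lia) (maxKernelPairs_eq_empty_of_finrank_eq_four hgen h4),
    fun h5 => eq_zero (by lia) (maxKernelPairs_eq_empty_of_finrank_eq_five hgen h5),
    fun h6 => ?_, fun h7 => ⟨fun hodd => eq_zero (by lia) ?_, fun heven => ?_⟩, fun h8 => ?_⟩
  · rw [hcount (by lia), ncard_maxKernelPairs_of_finrank_eq_six (h6 ▸ hsn) hσ h6, h6]
  · exact maxKernelPairs_eq_empty_of_finrank_eq_seven hgen h7
      (two_eq_zero_iff.not.2 (Nat.not_even_iff_odd.2 hodd))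
  · exact weightCount3_of_finrank_eq_seven_of_two_eq_zero hgen h7 (two_eq_zero_iff.2 heven)
  · have s_odd : Odd s :=
      Nat.coprime_two_right.1 (Nat.Coprime.coprime_dvd_right (h8 ▸ by norm_num) hsn)
    rw [weightCount3_eq_ncard_mul_of_finrank_eq_eight hgen h8]
    refine ⟨fun hmod => ?_, fun hmod => ?_, fun hmod => ?_⟩
    · rw [ncard_swappedRoots_of_card_mod_three_eq_one hσ hmod, zero_mul]
    · rw [ncard_swappedRoots_of_card_mod_three_eq_zero hmod, one_mul]
    · rw [ncard_swappedRoots_of_card_mod_three_eq_two s_odd hσ (h8 ▸ by decide) hmod]
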